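/- Let a, b, x ∈ ℤ with a < x < b, f, h : ℤ → ℝ, α, β ≥ 0 not both zero, γ, Γ ∈ ℝ with γ ≤ f(t+1)-f(t) ≤ Γ for all a ≤ t < b, and P the discrete weighted kernel. Then |f(x)/(α+β)·[α(h(x)-h(a))/(x-a) + β(h(b)-h(x))/(b-x)] - ((γ+Γ)/2)·∑_{t=a}^{b-1} P(x,t) - 1/(α+β)·[α/(x-a)∑_{t=a}^{x-1} f(t+1)Δh(t) + β/(b-x)∑_{t=x}^{b-1} f(t+1)Δh(t)]| ≤ ((Γ-γ)/2)·∑_{t=a}^{b-1} |P(x,t)|. -/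

import Mathlib

open Finset

theorem int_telescope (g : ℤ → ℝ) (a x : ℤ) (hax : a ≤ x) :
    ∑ t ∈ Finset.Ico a x, (g (t + 1) - g t) = g x - g a := by
  induction x, hax using Int.le_induction with
  | base => simp
  | succ n hn ih =>
    have h1 : Finset.Ico a (n + 1) = insert n (Finset.Ico a n) := by
      ext t
      simp only [Finset.mem_Ico, Finset.mem_insert]
      omega
    rw [h1, Finset.sum_insert (by simp), ih]
    ring

theorem discrete_weighted_perturbed_ostrowski
    (a b x : ℤ) (α β γ Γ : ℝ) (f h : ℤ → ℝ) (P : ℤ → ℝ)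
    (hax : a < x) (hxb : x < b)
    (hα : 0 ≤ α) (hβ : 0 ≤ β) (hαβ : 0 < α + β)
    (hbound : ∀ t : ℤ, a ≤ t → t < b → γ ≤ f (t + 1) - f t ∧ f (t + 1) - f t ≤ Γ)
    (hP : ∀ t : ℤ, P t = if t < x
        then α / (α + β) * (h t - h a) / ((x : ℝ) - (a : ℝ))
        else -β / (α + β) * (h b - h t) / ((b : ℝ) - (x : ℝ))) :
    |f x / (α + β) * (α * (h x - h a) / ((x : ℝ) - (a : ℝ))
          + β * (h b - h x) / ((b : ℝ) - (x : ℝ)))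
      - (γ + Γ) / 2 * ∑ t ∈ Finset.Ico a b, P t
      - 1 / (α + β) *
          (α / ((x : ℝ) - (a : ℝ)) *
              ∑ t ∈ Finset.Ico a x, f (t + 1) * (h (t + 1) - h t)
           + β / ((b : ℝ) - (x : ℝ)) *
              ∑ t ∈ Finset.Ico x b, f (t + 1) * (h (t + 1) - h t))|
      ≤ (Γ - γ) / 2 * ∑ t ∈ Finset.Ico a b, |P t| := by
  have hxa : ((x : ℝ) - (a : ℝ)) ≠ 0 := by
    have : (a : ℝ) < x := by exact_mod_cast hax
    linarith
  have hbx : ((b : ℝ) - (x : ℝ)) ≠ 0 := by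
    have : (x : ℝ) < b := by exact_mod_cast hxb
    linarith
  have hs : α + β ≠ 0 := hαβ.ne'
  have h1 := int_telescope (fun t => f t * (h t - h a)) a x hax.le
  have h2 := int_telescope (fun t => f t * (h t - h b)) x b hxb.le
  have e1 : ∑ t ∈ Finset.Ico a x, P t * (f (t + 1) - f t) =
      α / (α + β) / ((x : ℝ) - a) * (f x * (h x - h a)
        - ∑ t ∈ Finset.Ico a x, f (t + 1) * (h (t + 1) - h t)) := by
    have : f x * (h x - h a) = ∑ t ∈ Finset.Ico a x,
        (f (t + 1) * (h (t + 1) - h a) - f t * (h t - h a)) := by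
      rw [h1]; ring
    rw [this, ← Finset.sum_sub_distrib, Finset.mul_sum]
    refine Finset.sum_congr rfl fun t ht => ?_
    rw [hP, if_pos (Finset.mem_Ico.1 ht).2]
    ring
  have e2 : ∑ t ∈ Finset.Ico x b, P t * (f (t + 1) - f t) =
      β / (α + β) / ((b : ℝ) - x) * (f x * (h b - h x)
        - ∑ t ∈ Finset.Ico x b, f (t + 1) * (h (t + 1) - h t)) := by
    have : f x * (h b - h x) = ∑ t ∈ Finset.Ico x b,
        (f (t + 1) * (h (t + 1) - h b) - f t * (h t - h b)) := by
      rw [h2]; ring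
    rw [this, ← Finset.sum_sub_distrib, Finset.mul_sum]
    refine Finset.sum_congr rfl fun t ht => ?_
    rw [hP, if_neg (not_lt.2 (Finset.mem_Ico.1 ht).1)]
    ring
  have hsplit : Finset.Ico a b = Finset.Ico a x ∪ Finset.Ico x b :=
    (Finset.Ico_union_Ico_eq_Ico hax.le hxb.le).symm
  have e3 : ∑ t ∈ Finset.Ico a b, P t * (f (t + 1) - f t) =
      ∑ t ∈ Finset.Ico a x, P t * (f (t + 1) - f t)
      + ∑ t ∈ Finset.Ico x b, P t * (f (t + 1) - f t) := by
    rw [hsplit, Finset.sum_union (Finset.Ico_disjoint_Ico_consecutive a x b)]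
  have key : f x / (α + β) * (α * (h x - h a) / ((x : ℝ) - (a : ℝ))
          + β * (h b - h x) / ((b : ℝ) - (x : ℝ)))
      - (γ + Γ) / 2 * ∑ t ∈ Finset.Ico a b, P t
      - 1 / (α + β) *
          (α / ((x : ℝ) - (a : ℝ)) *
              ∑ t ∈ Finset.Ico a x, f (t + 1) * (h (t + 1) - h t)
           + β / ((b : ℝ) - (x : ℝ)) *
              ∑ t ∈ Finset.Ico x b, f (t + 1) * (h (t + 1) - h t))
      = ∑ t ∈ Finset.Ico a b, P t * ((f (t + 1) - f t) - (γ + Γ) / 2) := by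
    simp_rw [mul_sub (P _) (f _ - f _)]
    rw [Finset.sum_sub_distrib, e3, e1, e2, ← Finset.sum_mul]
    ring
  rw [key, Finset.mul_sum]
  refine (Finset.abs_sum_le_sum_abs _ _).trans (Finset.sum_le_sum fun t ht => ?_)
  obtain ⟨ha, hb⟩ := Finset.mem_Ico.1 ht
  obtain ⟨l, u⟩ := hbound t ha hb
  rw [abs_mul, mul_comm]
  refine mul_le_mul_of_nonneg_right ?_ (abs_nonneg _)
  rw [abs_le]
  constructor <;> linarith
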